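/- **Setting.** Let $F$ be a signature and $V$ a set of variables. Let $R$ be a deterministic conditional term rewriting system (DCTRS) over $F$: a set of rules $\rho: l \to r \Leftarrow s_1 \approx t_1, \dots, s_k \approx t_k$ ($k \ge 0$) over $F$ and $V$ with $l \notin V$, $\mathrm{Var}(s_i) \subseteq \mathrm{Var}(l, t_1, \dots, t_{i-1})$ for all $i$, and $\mathrm{Var}(r) \subseteq \mathrm{Var}(l, s_1, t_1, \dots, s_k, t_k)$. A rule is conditional if $k \ge 1$. Defined symbols are the root symbols of left-hand sides of $R$; the other symbols of $F$ are constructors. Each symbol $f$ has finitely many, say $m = m_f$, conditional $f$-rules (conditional rules whose left-hand side has root $f$), numbered $1, \dots, m$ in some fixed order. For a conditional rule $\rho$ put $X_j = \mathrm{Var}(l, t_1, \dots, t_{j-1})$ and $V_j = \mathrm{Var}(t_1, \dots, t_{j-1})$, and let $\vec{X_j}$, $\vec{V_j}$ list these sets in a fixed order. **Unraveling.** $U(R)$ consists of the unconditional rules of $R$ and, for each conditional $\rho \in R$, of the rules $l \to U^\rho_1(s_1, \vec{X_1})$, $U^\rho_j(t_j, \vec{X_j}) \to U^\rho_{j+1}(s_{j+1},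 \vec{X_{j+1}})$ for $1 \le j < k$, and $U^\rho_k(t_k, \vec{X_k}) \to r$, where the $U^\rho_j$ are fresh symbols; $U_R(F)$ is $F$ with these symbols added. Assume that $R$ is $U$-WLL: for every rule $l' \to r'$ of $U(R)$, each variable of $r'$ occurs exactly once in $l'$. **SR transformation.** The signature $\bar F$ has a symbol $\bar f$ of arity $n + m_f$ for every $f \in F$ of arity $n$ (so a constructor keeps its arity), a constant $\bot$, a unary symbol $\langle\cdot\rangle$, and a tuple symbol $[\ ]^\rho_j$ of arity $1 + |V_j|$ for every conditional $\rho \in R$ and $1 \le j \le k$. For a term $t$ over $F$, $\mathrm{ext}(t)$ replaces each $f$ by $\bar f$ and fills the extra arguments (the last $m_f$ ones) with distinct fresh variables, and $\bar t$ does the same with $\bot$ in all extra arguments. The system $SR(R)$ consists of * $\mathrm{ext}(l) \to \langle \bar r \rangle$ for each unconditional rule $l \to r$ of $R$; * for the $i$-th conditional $f$-rule $\rho: f(w_1, \dots, w_n) \to r \Leftarrow s_1 \approx t_1, \dots, s_k \approx t_k$, writing $C[a] = \bar f(\mathrm{ext}(w_1), \dots, \mathrm{ext}(w_n), z_1, \dots,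 z_{i-1}, a, z_{i+1}, \dots, z_m)$ with fresh variables $z_q$: $C[\bot] \to C[[\langle \bar{s_1} \rangle, \vec{V_1}]^\rho_1]$, $C[[\langle \mathrm{ext}(t_j) \rangle, \vec{V_j}]^\rho_j] \to C[[\langle \overline{s_{j+1}} \rangle, \vec{V_{j+1}}]^\rho_{j+1}]$ for $1 \le j < k$, and $C[[\langle \mathrm{ext}(t_k) \rangle, \vec{V_k}]^\rho_k] \to \langle \bar r \rangle$; * $\langle\langle x \rangle\rangle \to \langle x \rangle$, and $\bar f(x_1, \dots, \langle x_i \rangle, \dots, x_n, z_1, \dots, z_m) \to \langle \bar f(x_1, \dots, x_n, \bot, \dots, \bot) \rangle$ for every $f \in F$ of arity $n$ and $1 \le i \le n$. A term $t \in T(\bar F, V)$ is reachable if it is a subterm of some $t_0$ with $\langle \bar s \rangle \to^*_{SR(R)} t_0$ for some $s \in T(F, V)$. The partial mapping $\hat{\cdot}$ from $T(\bar F, V)$ to $T(F, V)$ is given by $\hat x = x$ for $x \in V$, $\widehat{\bar f(t_1, \dots, t_n, u_1, \dots, u_m)} = f(\hat{t_1}, \dots, \hat{t_n})$ for $f \in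 F$ of arity $n$, and $\widehat{\langle t \rangle} = \hat t$; it is undefined on terms rooted by $\bot$ or a tuple symbol. **The mapping $\Phi$.** The sets $\Phi(t), \Psi(t) \subseteq T(U_R(F), V)$ are defined recursively by: * $\Phi(x) = \{x\}$ for $x \in V$; $\Phi(\langle t \rangle) = \Phi(t)$; $\Phi(\bar c(t_1, \dots, t_n)) = \{c(t'_1, \dots, t'_n) : t'_q \in \Phi(t_q)\}$ for constructors $c$; * $\Phi(\bar f(t_1, \dots, t_n, u_1, \dots, u_m)) = \Psi(\bar f(t_1, \dots, t_n, \bot, \dots, \bot)) \cup \bigcup_{i : u_i \ne \bot} \Psi(\bar f(t_1, \dots, t_n, \bot^{i-1}, u_i, \bot^{m-i}))$ for defined symbols $f$; * $\Psi(\bar f(t_1, \dots, t_n, \bot, \dots, \bot)) = \{f(t'_1, \dots, t'_n) : t'_q \in \Phi(t_q)\}$ for defined symbols $f$; * $\Psi(\bar f(a_1, \dots, a_n, \bot^{i-1}, [\langle t' \rangle, b_1, \dots, b_p]^\rho_j, \bot^{m-i})) = \{U^\rho_j(u', \vec{u}') : u' \in \Phi(t'),\ \vec{u}' \in \Phi(\sigma(\vec{X_j}))\}$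 (componentwise), if $\rho$ is the $i$-th conditional $f$-rule, with left-hand side $f(w_1, \dots, w_n)$, and $\sigma$ is a substitution with $\sigma(\vec{V_j}) = b_1, \dots, b_p$ and $\sigma(\mathrm{ext}(w_1), \dots, \mathrm{ext}(w_n)) = a_1, \dots, a_n$; * $\Phi(t) = \emptyset$ and $\Psi(t) = \emptyset$ in all other cases. **Statement.** Let $R$ be a $U$-WLL DCTRS over $F$. For every reachable term $t \in T(\bar F, V)$ whose root symbol is neither $\bot$ nor a tuple symbol $[\ ]^\rho_j$, the term $\hat t$ is defined and belongs to $\Phi(t)$; in particular, $|\Phi(t)| \ge 1$. -/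

import Mathlib

universe u v w

/-- First-order terms over a signature `F` and variables `X`. -/
inductive Term (F : Type u) (X : Type v) : Type (max u v) where
  | var : X → Term F X
  | app : F → List (Term F X) → Term F X

namespace Term

variable {F : Type u} {X : Type v} {Y : Type w}

/-- Application of a substitution. -/
def subst (σ : X → Term F Y) : Term F X → Term F Y
  | .var x => σ x
  | .app f ts => .app f (ts.map (fun t => subst σ t))

/-- Renaming of variables. -/
def rename (g : X → Y) (t : Term F X) : Term F Y := t.subst (fun x => .var (g x))

/-- The number `|t|_x` of occurrences of the variable `x` in `t`. -/
def count [DecidableEq X] (x : X) : Term F X → ℕ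
  | .var y => if y = x then 1 else 0
  | .app _ ts => (ts.map (fun t => count x t)).sum

/-- The list of variable occurrences of a term, from left to right. -/
def varList : Term F X → List X
  | .var x => [x]
  | .app _ ts => ts.flatMap (fun t => varList t)

/-- `t` respects the arities `ar`, that is, `t` is a term over the signature `(F, ar)`. -/
inductive WF (ar : F → ℕ) : Term F X → Prop where
  | var (x : X) : WF ar (.var x)
  | app (f : F) (ts : List (Term F X)) :
      ts.length = ar f → (∀ t ∈ ts, WF ar t) → WF ar (.app f ts)

/-- `IsSubterm s t`: `s` is a (not necessarily proper) subterm of `t`. -/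
inductive IsSubterm (s : Term F X) : Term F X → Prop where
  | refl : IsSubterm s s
  | arg {f : F} {ts : List (Term F X)} {t : Term F X} :
      t ∈ ts → IsSubterm s t → IsSubterm s (.app f ts)

end Term

/-- Number of occurrences of `x` in a sequence of terms. -/
def seqCount {F : Type u} {X : Type v} [DecidableEq X] (x : X) (ts : List (Term F X)) : ℕ :=
  (ts.map (Term.count x)).sum

/-- An oriented conditional rewrite rule `l → r ⇐ s₁ ≈ t₁, …, s_k ≈ t_k`
(unconditional if `k = 0`). -/
structure CRule (F : Type u) (X : Type v) : Type (max u v) where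
  lhs : Term F X
  rhs : Term F X
  conds : List (Term F X × Term F X)

/-- A conditional term rewriting system: a set of conditional rules. -/
abbrev CTRS (F : Type u) (X : Type v) := Set (CRule F X)

namespace CRule

variable {F : Type u} {X : Type v}

/-- Weak left-linearity: `|l, t₁, …, t_k|_x = 1` for every `x ∈ Var(r, s₁, …, s_k)`. -/
def WLL [DecidableEq X] (ρ : CRule F X) : Prop :=
  ∀ x : X, 0 < seqCount x (ρ.rhs :: ρ.conds.map Prod.fst) →
    seqCount x (ρ.lhs :: ρ.conds.map Prod.snd) = 1

/-- Determinism: `Var(s_{j+1}) ⊆ Var(l, t₁, …, t_j)` for all `j < k`. -/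
def Det [DecidableEq X] (ρ : CRule F X) : Prop :=
  ∀ (j : ℕ) (s t : Term F X), ρ.conds[j]? = some (s, t) → ∀ x : X, 0 < s.count x →
    0 < seqCount x (ρ.lhs :: (ρ.conds.take j).map Prod.snd)

/-- Type 3: `Var(r) ⊆ Var(l, s₁, t₁, …, s_k, t_k)`. -/
def Type3 [DecidableEq X] (ρ : CRule F X) : Prop :=
  ∀ x : X, 0 < ρ.rhs.count x →
    0 < seqCount x (ρ.lhs :: ρ.conds.flatMap (fun c => [c.1, c.2]))

/-- All terms of the rule are terms over the signature `(F, ar)`. -/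
def Over (ar : F → ℕ) (ρ : CRule F X) : Prop :=
  ρ.lhs.WF ar ∧ ρ.rhs.WF ar ∧ ∀ c ∈ ρ.conds, c.1.WF ar ∧ c.2.WF ar

end CRule

/-- `R` is a DCTRS over the signature `(F, ar)`: its rules are over `(F, ar)`, have non-variable
left-hand sides, are deterministic and are of Type 3. -/
def IsDCTRS {F : Type u} {V : Type v} [DecidableEq V] (ar : F → ℕ) (R : CTRS F V) : Prop :=
  ∀ ρ ∈ R, ρ.Over ar ∧ (∀ x : V, ρ.lhs ≠ .var x) ∧ ρ.Det ∧ ρ.Type3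

/-- Closure of a relation under contexts. -/
inductive CtxStep {F : Type u} {X : Type v} (root : Term F X → Term F X → Prop) :
    Term F X → Term F X → Prop where
  | root {s t : Term F X} : root s t → CtxStep root s t
  | congr {f : F} {pre post : List (Term F X)} {s t : Term F X} :
      CtxStep root s t →
      CtxStep root (.app f (pre ++ s :: post)) (.app f (pre ++ t :: post))

/-- A rewrite step at the root with a rule of `R`, the conditions being evaluated with `prev`.
The rules may use other variables (`Y`) than the terms that are rewritten (`X`). -/
def RootStep {F : Type u} {X : Type v} {Y : Type w} (R : CTRS F Y)
    (prev : Term F X → Term F X → Prop) (s t : Term F X) : Prop :=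
  ∃ ρ ∈ R, ∃ σ : Y → Term F X,
    s = ρ.lhs.subst σ ∧ t = ρ.rhs.subst σ ∧
    ∀ c ∈ ρ.conds, Relation.ReflTransGen prev (c.1.subst σ) (c.2.subst σ)

/-- The reduction relation of level `n`. -/
def LevelStep {F : Type u} {X : Type v} {Y : Type w} (R : CTRS F Y) :
    ℕ → Term F X → Term F X → Prop
  | 0 => fun _ _ => False
  | n + 1 => CtxStep (RootStep R (LevelStep R n))

/-- The reduction relation `→_R`, the union over all levels. -/
def Red {F : Type u} {X : Type v} {Y : Type w} (R : CTRS F Y) (s t : Term F X) : Prop :=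
  ∃ n : ℕ, LevelStep R n s t

/-! ### The simultaneous unraveling -/

/-- The symbols of `U_R(F)`: those of `F`, and `U^ρ_{j+1}`, written `Sum.inr (ρ, j)`. -/
abbrev USym (F : Type u) (V : Type v) := F ⊕ (CRule F V × ℕ)

/-- The inclusion of `T(F, V)` into `T(U_R(F), V)`. -/
def liftU {F : Type u} {V : Type v} : Term F V → Term (USym F V) V
  | .var x => .var x
  | .app f ts => .app (Sum.inl f) (ts.map (fun t => liftU t))

/-- The sequence of the elements of `X_{j+1} = Var(l, t₁, …, t_j)`. -/
def Xlist {F : Type u} {V : Type v} [DecidableEq V] (ρ : CRule F V) (j : ℕ) : List V :=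
  (ρ.lhs.varList ++ ((ρ.conds.take j).map Prod.snd).flatMap Term.varList).dedup

/-- The term `U^ρ_{j+1}(t, X_{j+1})`. -/
def uterm {F : Type u} {V : Type v} [DecidableEq V] (ρ : CRule F V) (j : ℕ) (t : Term F V) :
    Term (USym F V) V :=
  .app (Sum.inr (ρ, j)) (liftU t :: (Xlist ρ j).map Term.var)

/-- The simultaneous unraveling `U(R)`. -/
inductive USys {F : Type u} {V : Type v} [DecidableEq V] (R : CTRS F V) :
    CRule (USym F V) V → Prop where
  | uncond {ρ : CRule F V} : ρ ∈ R → ρ.conds = [] →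
      USys R ⟨liftU ρ.lhs, liftU ρ.rhs, []⟩
  | first {ρ : CRule F V} {s t : Term F V} : ρ ∈ R → ρ.conds[0]? = some (s, t) →
      USys R ⟨liftU ρ.lhs, uterm ρ 0 s, []⟩
  | next {ρ : CRule F V} {j : ℕ} {s t s' t' : Term F V} : ρ ∈ R →
      ρ.conds[j]? = some (s, t) → ρ.conds[j + 1]? = some (s', t') →
      USys R ⟨uterm ρ j t, uterm ρ (j + 1) s', []⟩
  | last {ρ : CRule F V} {j : ℕ} {s t : Term F V} : ρ ∈ R →
      ρ.conds[j]? = some (s, t) → j + 1 = ρ.conds.length →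
      USys R ⟨uterm ρ j t, liftU ρ.rhs, []⟩

/-- `R` is `U`-WLL: every rule of `U(R)` is WLL. -/
def IsUWLL {F : Type u} {V : Type v} [DecidableEq V] (R : CTRS F V) : Prop :=
  ∀ r, USys R r → r.WLL

/-! ### The SR transformation -/

/-- The symbols of the extended signature `F̄`: `c̄` and `f̄` (both `orig`), `⊥`, `⟨·⟩`, and
`[ ]^ρ_{j+1}`, written `tup ρ j`. -/
inductive SSym (F : Type u) (V : Type v) : Type (max u v) where
  | orig : F → SSym F V
  | bot : SSym F V
  | guard : SSym F V
  | tup : CRule F V → ℕ → SSym F V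

/-- The constant `⊥`. -/
def botT {F : Type u} {V : Type v} {X : Type w} : Term (SSym F V) X := .app .bot []

/-- The term `⟨t⟩`. -/
def guardT {F : Type u} {V : Type v} {X : Type w} (t : Term (SSym F V) X) :
    Term (SSym F V) X := .app .guard [t]

/-- The variables of the rules of `SR(R)`: those of `R`, and fresh ones. -/
abbrev RVar (V : Type v) := V ⊕ ℕ

/-- `f` is a defined symbol of `R`, that is, the root of a left-hand side. -/
def IsDefined {F : Type u} {V : Type v} (R : CTRS F V) (f : F) : Prop :=
  ∃ ρ ∈ R, ∃ ws, ρ.lhs = .app f ws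

/-- `m f` is the number of conditional `f`-rules of `R`, and `idx` numbers these rules:
`ρ` is the `(idx ρ + 1)`-th conditional `f`-rule. (So `m c = 0` for constructors `c`.) -/
def IsNumbering {F : Type u} {V : Type v} (R : CTRS F V) (m : F → ℕ)
    (idx : CRule F V → ℕ) : Prop :=
  ∀ f : F, Set.BijOn idx {ρ | ρ ∈ R ∧ ρ.conds ≠ [] ∧ ∃ ws, ρ.lhs = .app f ws} (Set.Iio (m f))

/-- `t̄`: every extra argument is `⊥`. -/
def barT {F : Type u} {V : Type v} (m : F → ℕ) : Term F V → Term (SSym F V) V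
  | .var x => .var x
  | .app f ts => .app (.orig f) (ts.map (fun t => barT m t) ++ List.replicate (m f) botT)

/-- `t̄`, as a term over the variables of the rules of `SR(R)`. -/
def barR {F : Type u} {V : Type v} (m : F → ℕ) (t : Term F V) : Term (SSym F V) (RVar V) :=
  (barT m t).rename Sum.inl

mutual
/-- `ext(t)`: the extra arguments are distinct fresh variables, numbered from `c` on. The second
component is the next unused number. -/
def extT {F : Type u} {V : Type v} (m : F → ℕ) :
    Term F V → ℕ → Term (SSym F V) (RVar V) × ℕ
  | .var x, c => (.var (Sum.inl x), c)
  | .app f ts, c =>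
      (.app (.orig f) ((extTList m ts c).1 ++
          (List.range (m f)).map (fun k => .var (Sum.inr ((extTList m ts c).2 + k)))),
        (extTList m ts c).2 + m f)

/-- `ext` on sequences of terms. -/
def extTList {F : Type u} {V : Type v} (m : F → ℕ) :
    List (Term F V) → ℕ → List (Term (SSym F V) (RVar V)) × ℕ
  | [], c => ([], c)
  | t :: ts, c =>
      ((extT m t c).1 :: (extTList m ts (extT m t c).2).1,
        (extTList m ts (extT m t c).2).2)
end

/-- The sequence of the elements of `V_{j+1} = Var(t₁, …, t_j)`. -/
def Vlist {F : Type u} {V : Type v} [DecidableEq V] (ρ : CRule F V) (j : ℕ) : List V :=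
  (((ρ.conds.take j).map Prod.snd).flatMap Term.varList).dedup

/-- The term `[⟨a⟩, V_{j+1}]^ρ_{j+1}`. -/
def tupT {F : Type u} {V : Type v} [DecidableEq V] (ρ : CRule F V) (j : ℕ)
    (a : Term (SSym F V) (RVar V)) : Term (SSym F V) (RVar V) :=
  .app (.tup ρ j) (guardT a :: (Vlist ρ j).map (fun x => .var (Sum.inl x)))

/-- For an `f`-rule `ρ` with arguments `ws` of its left-hand side, the term
`f̄(ext(ws), z₁, …, z_{i-1}, a, z_{i+1}, …, z_m)` with `i = idx ρ + 1`. -/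
def slotT {F : Type u} {V : Type v} (m : F → ℕ) (idx : CRule F V → ℕ) (ρ : CRule F V)
    (f : F) (ws : List (Term F V)) (a : Term (SSym F V) (RVar V)) :
    Term (SSym F V) (RVar V) :=
  .app (.orig f) ((extTList m ws 0).1 ++
    (List.range (m f)).map
      (fun q => if q = idx ρ then a else .var (Sum.inr ((extTList m ws 0).2 + q))))

/-- For an `f`-rule `ρ` with arguments `ws` of its left-hand side, `ext(t)` for a term `t` of the
conditions, its fresh variables being different from those of `slotT m idx ρ f ws`. -/
def extCond {F : Type u} {V : Type v} (m : F → ℕ) (f : F) (ws : List (Term F V))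
    (t : Term F V) : Term (SSym F V) (RVar V) :=
  (extT m t ((extTList m ws 0).2 + m f)).1

/-- The SR transformation `SR(R)`. The clause `shift` covers the auxiliary rules for constructors
(which have no extra arguments) and for defined symbols; its variables are `x_{q+1} = inr q` and
`z_{q+1} = inr (ar f + q)`. -/
inductive SRSys {F : Type u} {V : Type v} [DecidableEq V] (ar m : F → ℕ)
    (idx : CRule F V → ℕ) (R : CTRS F V) : CRule (SSym F V) (RVar V) → Prop where
  | uncond {ρ : CRule F V} : ρ ∈ R → ρ.conds = [] →
      SRSys ar m idx R ⟨(extT m ρ.lhs 0).1, guardT (barR m ρ.rhs), []⟩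
  | first {ρ : CRule F V} {f : F} {ws : List (Term F V)} {s t : Term F V} :
      ρ ∈ R → ρ.lhs = .app f ws → ρ.conds[0]? = some (s, t) →
      SRSys ar m idx R
        ⟨slotT m idx ρ f ws botT, slotT m idx ρ f ws (tupT ρ 0 (barR m s)), []⟩
  | next {ρ : CRule F V} {f : F} {ws : List (Term F V)} {j : ℕ} {s t s' t' : Term F V} :
      ρ ∈ R → ρ.lhs = .app f ws →
      ρ.conds[j]? = some (s, t) → ρ.conds[j + 1]? = some (s', t') →
      SRSys ar m idx R
        ⟨slotT m idx ρ f ws (tupT ρ j (extCond m f ws t)),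
          slotT m idx ρ f ws (tupT ρ (j + 1) (barR m s')), []⟩
  | last {ρ : CRule F V} {f : F} {ws : List (Term F V)} {j : ℕ} {s t : Term F V} :
      ρ ∈ R → ρ.lhs = .app f ws → ρ.conds[j]? = some (s, t) → j + 1 = ρ.conds.length →
      SRSys ar m idx R
        ⟨slotT m idx ρ f ws (tupT ρ j (extCond m f ws t)), guardT (barR m ρ.rhs), []⟩
  | unnest :
      SRSys ar m idx R
        ⟨guardT (guardT (.var (Sum.inr 0))), guardT (.var (Sum.inr 0)), []⟩
  | shift {f : F} {i : ℕ} : i < ar f →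
      SRSys ar m idx R
        ⟨.app (.orig f)
            ((List.range (ar f)).map
                (fun q => if q = i then guardT (.var (Sum.inr q)) else .var (Sum.inr q)) ++
              (List.range (m f)).map (fun q => .var (Sum.inr (ar f + q)))),
          guardT (.app (.orig f)
            ((List.range (ar f)).map (fun q => .var (Sum.inr q)) ++
              List.replicate (m f) botT)), []⟩

/-- `t` is reachable: it is a subterm of a term `t₀` with `⟨s̄⟩ →*_{SR(R)} t₀` for some
`s ∈ T(F, V)`. -/
def SRReachable {F : Type u} {V : Type v} [DecidableEq V] (ar m : F → ℕ)
    (idx : CRule F V → ℕ) (R : CTRS F V) (t : Term (SSym F V) V) : Prop :=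
  ∃ (s : Term F V) (t₀ : Term (SSym F V) V), s.WF ar ∧
    Relation.ReflTransGen (Red {r | SRSys ar m idx R r}) (guardT (barT m s)) t₀ ∧
    t.IsSubterm t₀

/-- The partial mapping `t̂`, which erases `⟨·⟩` and the extra arguments (those after the first
`ar f` ones). It is undefined (`none`) if erasing leaves a `⊥` or a tuple. -/
def hatT {F : Type u} {V : Type v} (ar : F → ℕ) : Term (SSym F V) V → Option (Term F V)
  | .var x => some (.var x)
  | .app (.orig f) ts =>
      Option.map (Term.app f) ((ts.take (ar f)).attach.mapM (fun t => hatT ar t.1))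
  | .app .guard [t] => hatT ar t
  | .app _ _ => none
decreasing_by
  · have h1 : t.1 ∈ ts := List.mem_of_mem_take t.2
    have := List.sizeOf_lt_of_mem h1
    simp only [Term.app.sizeOf_spec]
    omega
  · simp
    omega

/-! ### The mappings `Φ` and `Ψ` -/

mutual
/-- `PhiMem ar m idx R t u` means `u ∈ Φ(t)`. -/
inductive PhiMem {F : Type u} {V : Type v} [DecidableEq V] (ar m : F → ℕ)
    (idx : CRule F V → ℕ) (R : CTRS F V) :
    Term (SSym F V) V → Term (USym F V) V → Prop where
  | var (x : V) : PhiMem ar m idx R (.var x) (.var x)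
  | con {c : F} {ts : List (Term (SSym F V) V)} {us : List (Term (USym F V) V)} :
      ¬ IsDefined R c → ts.length = ar c → us.length = ar c →
      (∀ p ∈ ts.zip us, PhiMem ar m idx R p.1 p.2) →
      PhiMem ar m idx R (.app (.orig c) ts) (.app (Sum.inl c) us)
  | reset {f : F} {ts es : List (Term (SSym F V) V)} {u : Term (USym F V) V} :
      IsDefined R f → ts.length = ar f → es.length = m f →
      PsiMem ar m idx R (.app (.orig f) (ts ++ List.replicate (m f) botT)) u →
      PhiMem ar m idx R (.app (.orig f) (ts ++ es)) u
  | single {f : F} {ts es : List (Term (SSym F V) V)} {i : ℕ} {e : Term (SSym F V) V}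
      {u : Term (USym F V) V} :
      IsDefined R f → ts.length = ar f → es.length = m f → es[i]? = some e → e ≠ botT →
      PsiMem ar m idx R (.app (.orig f) (ts ++ (List.replicate (m f) botT).set i e)) u →
      PhiMem ar m idx R (.app (.orig f) (ts ++ es)) u
  | guard {t : Term (SSym F V) V} {u : Term (USym F V) V} :
      PhiMem ar m idx R t u → PhiMem ar m idx R (guardT t) u

/-- `PsiMem ar m idx R t u` means `u ∈ Ψ(t)`. -/
inductive PsiMem {F : Type u} {V : Type v} [DecidableEq V] (ar m : F → ℕ)
    (idx : CRule F V → ℕ) (R : CTRS F V) :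
    Term (SSym F V) V → Term (USym F V) V → Prop where
  | plain {f : F} {ts : List (Term (SSym F V) V)} {us : List (Term (USym F V) V)} :
      IsDefined R f → ts.length = ar f → us.length = ar f →
      (∀ p ∈ ts.zip us, PhiMem ar m idx R p.1 p.2) →
      PsiMem ar m idx R (.app (.orig f) (ts ++ List.replicate (m f) botT))
        (.app (Sum.inl f) us)
  | cond {f : F} {ρ : CRule F V} {ws : List (Term F V)} {j : ℕ}
      {ts vs : List (Term (SSym F V) V)} {t : Term (SSym F V) V}
      {σ : RVar V → Term (SSym F V) V}
      {u : Term (USym F V) V} {us : List (Term (USym F V) V)} :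
      ρ ∈ R → ρ.lhs = .app f ws → j < ρ.conds.length → ts.length = ar f →
      (Vlist ρ j).map (fun x => σ (Sum.inl x)) = vs →
      (extTList m ws 0).1.map (Term.subst σ) = ts →
      PhiMem ar m idx R t u →
      us.length = (Xlist ρ j).length →
      (∀ p ∈ (Xlist ρ j).zip us, PhiMem ar m idx R (σ (Sum.inl p.1)) p.2) →
      PsiMem ar m idx R
        (.app (.orig f) (ts ++ (List.replicate (m f) botT).set (idx ρ)
          (.app (.tup ρ j) (guardT t :: vs))))
        (.app (Sum.inr (ρ, j)) (u :: us))
end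

/-- The set `Φ(t)`. -/
def Phi {F : Type u} {V : Type v} [DecidableEq V] (ar m : F → ℕ) (idx : CRule F V → ℕ)
    (R : CTRS F V) (t : Term (SSym F V) V) : Set (Term (USym F V) V) :=
  {u | PhiMem ar m idx R t u}

/-- The root symbol of `t` is neither `⊥` nor a tuple symbol. -/
def ProperRoot {F : Type u} {V : Type v} (t : Term (SSym F V) V) : Prop :=
  (∀ as, t ≠ .app .bot as) ∧ ∀ ρ j as, t ≠ .app (.tup ρ j) as

/-! ### Variable occurrences -/

theorem Term.count_pos_iff {F : Type u} {X : Type v} [DecidableEq X] (x : X) :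
    ∀ t : Term F X, 0 < t.count x ↔ x ∈ t.varList
  | .var y => by
      by_cases h : y = x
      · simp [Term.count, Term.varList, h]
      · simp [Term.count, Term.varList, h, Ne.symm h]
  | .app f ts => by
      have ih : ∀ t ∈ ts, 0 < t.count x ↔ x ∈ t.varList := fun t _ => Term.count_pos_iff x t
      simp only [Term.count, Term.varList, List.mem_flatMap, List.sum_pos_iff_exists_pos_nat,
        List.mem_map]
      constructor
      · rintro ⟨_, ⟨t, ht, rfl⟩, h⟩
        exact ⟨t, ht, (ih t ht).1 h⟩
      · rintro ⟨t, ht, h⟩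
        exact ⟨_, ⟨t, ht, rfl⟩, (ih t ht).2 h⟩

theorem seqCount_pos_iff {F : Type u} {X : Type v} [DecidableEq X] (x : X)
    (ts : List (Term F X)) : 0 < seqCount x ts ↔ ∃ t ∈ ts, x ∈ t.varList := by
  simp only [seqCount, List.sum_pos_iff_exists_pos_nat, List.mem_map]
  constructor
  · rintro ⟨_, ⟨t, ht, rfl⟩, h⟩
    exact ⟨t, ht, (Term.count_pos_iff x t).1 h⟩
  · rintro ⟨t, ht, h⟩
    exact ⟨_, ⟨t, ht, rfl⟩, (Term.count_pos_iff x t).2 h⟩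

theorem length_extTList {F : Type u} {V : Type v} (m : F → ℕ)
    (ts : List (Term F V)) (c : ℕ) : (extTList m ts c).1.length = ts.length := by
  induction ts generalizing c with
  | nil => simp [extTList]
  | cons t ts ih => simp [extTList, ih]

theorem exists_extT_mem_extTList {F : Type u} {V : Type v} (m : F → ℕ)
    {ts : List (Term F V)} {t : Term F V} (ht : t ∈ ts) (c : ℕ) : ∃ c', (extT m t c').1 ∈ (extTList m ts c).1 := by
  induction ts generalizing c with
  | nil => simp at ht
  | cons u ts ih =>
    rw [extTList]
    rcases List.mem_cons.1 ht with rfl | ht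
    · exact ⟨c, List.mem_cons_self⟩
    · obtain ⟨c', h⟩ := ih ht (extT m u c).2
      exact ⟨c', List.mem_cons_of_mem _ h⟩

theorem IsNumbering.eq_zero_of_not_isDefined {F : Type u} {V : Type v} {m : F → ℕ}
    {idx : CRule F V → ℕ} {R : CTRS F V} (hN : IsNumbering R m idx) {c : F} (hc : ¬ IsDefined R c) : m c = 0 := by
  by_contra h
  obtain ⟨ρ, ⟨hρ, -, hl⟩, -⟩ := (hN c).surjOn (Set.mem_Iio.2 (Nat.pos_of_ne_zero h))
  exact hc ⟨ρ, hρ, hl⟩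

section

variable {F : Type u} {V : Type v} [DecidableEq V]

theorem mem_Vlist_iff {ρ : CRule F V} {j : ℕ} {x : V} :
    x ∈ Vlist ρ j ↔ ∃ i < j, ∃ s t, ρ.conds[i]? = some (s, t) ∧ x ∈ t.varList := by
  simp only [Vlist, List.mem_dedup, List.mem_flatMap, List.mem_map]
  constructor
  · rintro ⟨_, ⟨⟨s, t⟩, hc, rfl⟩, hx⟩
    obtain ⟨i, hi⟩ := List.mem_iff_getElem?.1 hc
    rw [List.getElem?_take] at hi
    split_ifs at hi with hij
    exact ⟨i, hij, s, t, hi, hx⟩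
  · rintro ⟨i, hij, s, t, hi, hx⟩
    refine ⟨t, ⟨(s, t), List.mem_iff_getElem?.2 ⟨i, ?_⟩, rfl⟩, hx⟩
    rw [List.getElem?_take, if_pos hij, hi]

theorem mem_Vlist_succ {ρ : CRule F V} {j : ℕ} {s t : Term F V}
    (h : ρ.conds[j]? = some (s, t)) {x : V} (hx : x ∈ Vlist ρ (j + 1)) :
    x ∈ Vlist ρ j ∨ x ∈ t.varList := by
  obtain ⟨i, hi, s', t', hc, hx⟩ := mem_Vlist_iff.1 hx
  rcases Nat.lt_succ_iff_lt_or_eq.1 hi with hi | rfl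
  · exact Or.inl (mem_Vlist_iff.2 ⟨i, hi, s', t', hc, hx⟩)
  · rw [h] at hc
    obtain ⟨rfl, rfl⟩ := Prod.mk.inj (Option.some.inj hc)
    exact Or.inr hx

theorem CRule.Det.mem_of_mem_varList {ρ : CRule F V} (h : ρ.Det) {j : ℕ} {s t : Term F V}
    (hj : ρ.conds[j]? = some (s, t)) {x : V} (hx : x ∈ s.varList) :
    x ∈ ρ.lhs.varList ∨ x ∈ Vlist ρ j := by
  obtain ⟨u, hu, hxu⟩ := (seqCount_pos_iff x _).1 (h j s t hj x ((Term.count_pos_iff x s).2 hx))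
  rcases List.mem_cons.1 hu with rfl | hu
  · exact Or.inl hxu
  · right
    simp only [Vlist, List.mem_dedup, List.mem_flatMap]
    exact ⟨u, hu, hxu⟩

theorem CRule.Type3.mem_of_mem_varList {ρ : CRule F V} (h3 : ρ.Type3) (h : ρ.Det) {x : V}
    (hx : x ∈ ρ.rhs.varList) : x ∈ ρ.lhs.varList ∨ x ∈ Vlist ρ ρ.conds.length := by
  obtain ⟨u, hu, hxu⟩ := (seqCount_pos_iff x _).1 (h3 x ((Term.count_pos_iff x _).2 hx))
  rcases List.mem_cons.1 hu with rfl | hu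
  · exact Or.inl hxu
  · obtain ⟨⟨s, t⟩, hc, hu⟩ := List.mem_flatMap.1 hu
    obtain ⟨i, hi⟩ := List.mem_iff_getElem?.1 hc
    have hil : i < ρ.conds.length := (List.getElem?_eq_some_iff.1 hi).1
    simp only [List.mem_cons, List.not_mem_nil, or_false] at hu
    rcases hu with rfl | rfl
    · rcases h.mem_of_mem_varList hi hxu with hl | hv
      · exact Or.inl hl
      · obtain ⟨i', hi', s', t', hc', hx'⟩ := mem_Vlist_iff.1 hv
        exact Or.inr (mem_Vlist_iff.2 ⟨i', hi'.trans hil, s', t', hc', hx'⟩)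
    · exact Or.inr (mem_Vlist_iff.2 ⟨i, hil, s, _, hi, hxu⟩)

/-! ### Well-sorted terms

The terms over `F̄` have two sorts: `true` for the terms that stand for terms over `F`, and `false`
for the terms that may stand in an extra argument, which are `⊥` and the tuples. -/

/-- The sort of the terms with root `g`. -/
def SSym.sort : SSym F V → Bool
  | .orig _ => true
  | .bot => false
  | .guard => true
  | .tup _ _ => false

/-- The arity of a symbol of `F̄`. -/
def SSym.arity (ar m : F → ℕ) : SSym F V → ℕ
  | .orig f => ar f + m f
  | .bot => 0
  | .guard => 1
  | .tup ρ j => 1 + (Vlist ρ j).length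

/-- The sort of the argument number `i` of a symbol of `F̄`. -/
def SSym.argSort (ar : F → ℕ) : SSym F V → ℕ → Bool
  | .orig f, i => decide (i < ar f)
  | _, _ => true

/-- `WellSorted ar m b t`: the term `t` over `F̄` is well-sorted, of sort `b`. -/
inductive WellSorted (ar m : F → ℕ) : Bool → Term (SSym F V) V → Prop where
  | var (x : V) : WellSorted ar m true (.var x)
  | app (g : SSym F V) (ts : List (Term (SSym F V) V)) :
      ts.length = g.arity ar m →
      (∀ i t, ts[i]? = some t → WellSorted ar m (g.argSort ar i) t) →
      WellSorted ar m g.sort (.app g ts)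

namespace WellSorted

variable {ar m : F → ℕ}

theorem app_iff {b : Bool} {g : SSym F V} {ts : List (Term (SSym F V) V)} :
    WellSorted ar m b (.app g ts) ↔ b = g.sort ∧ ts.length = g.arity ar m ∧
      ∀ i t, ts[i]? = some t → WellSorted ar m (g.argSort ar i) t := by
  constructor
  · intro h
    cases h with
    | app _ _ h1 h2 => exact ⟨rfl, h1, h2⟩
  · rintro ⟨rfl, h1, h2⟩
    exact .app g ts h1 h2

theorem bot : WellSorted ar m false (botT : Term (SSym F V) V) :=
  app_iff.2 ⟨rfl, rfl, by simp⟩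

theorem guard_iff {b : Bool} {t : Term (SSym F V) V} :
    WellSorted ar m b (guardT t) ↔ b = true ∧ WellSorted ar m true t := by
  rw [guardT, app_iff]
  constructor
  · rintro ⟨h, -, h2⟩
    exact ⟨h, h2 0 t rfl⟩
  · rintro ⟨h, h2⟩
    refine ⟨h, rfl, fun i u hu => ?_⟩
    obtain rfl : u = t := by simpa using List.mem_of_getElem? hu
    exact h2

theorem tup_iff {b : Bool} {ρ : CRule F V} {j : ℕ} {ts : List (Term (SSym F V) V)} :
    WellSorted ar m b (.app (.tup ρ j) ts) ↔
      b = false ∧ ts.length = 1 + (Vlist ρ j).length ∧ ∀ t ∈ ts, WellSorted ar m true t := by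
  rw [app_iff]
  refine and_congr Iff.rfl (and_congr Iff.rfl ⟨fun h t ht => ?_, fun h i t hi => ?_⟩)
  · obtain ⟨i, hi⟩ := List.mem_iff_getElem?.1 ht
    exact h i t hi
  · exact h t (List.mem_of_getElem? hi)

theorem orig_append_iff {b : Bool} {f : F} {ts es : List (Term (SSym F V) V)}
    (hts : ts.length = ar f) :
    WellSorted ar m b (.app (.orig f) (ts ++ es)) ↔
      b = true ∧ es.length = m f ∧ (∀ t ∈ ts, WellSorted ar m true t) ∧
        ∀ e ∈ es, WellSorted ar m false e := by
  rw [app_iff]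
  constructor
  · rintro ⟨hb, hl, h⟩
    simp only [List.length_append, SSym.arity] at hl
    refine ⟨hb, by omega, fun t ht => ?_, fun e he => ?_⟩
    · obtain ⟨i, hi⟩ := List.mem_iff_getElem?.1 ht
      have hil := (List.getElem?_eq_some_iff.1 hi).1
      have := h i t (by rw [List.getElem?_append_left hil, hi])
      simpa [SSym.argSort, hts ▸ hil] using this
    · obtain ⟨i, hi⟩ := List.mem_iff_getElem?.1 he
      have := h (ts.length + i) e (by
        rw [List.getElem?_append_right (Nat.le_add_right _ _), Nat.add_sub_cancel_left, hi])
      simpa [SSym.argSort, hts] using this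
  · rintro ⟨hb, hl, h1, h2⟩
    refine ⟨hb, by simp [SSym.arity, hts, hl], fun i t hi => ?_⟩
    by_cases hil : i < ts.length
    · rw [List.getElem?_append_left hil] at hi
      simpa [SSym.argSort, hts ▸ hil] using h1 t (List.mem_of_getElem? hi)
    · rw [List.getElem?_append_right (by omega)] at hi
      simpa [SSym.argSort, hts ▸ hil] using h2 t (List.mem_of_getElem? hi)

/-- A well-sorted term with root `f̄` splits into its arguments and its extra arguments. -/
theorem exists_append {b : Bool} {f : F} {as : List (Term (SSym F V) V)}
    (h : WellSorted ar m b (.app (.orig f) as)) :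
    ∃ ts es, as = ts ++ es ∧ ts.length = ar f := by
  have hl : as.length = ar f + m f := (app_iff.1 h).2.1
  exact ⟨as.take (ar f), as.drop (ar f), (List.take_append_drop _ _).symm, by simp [hl]⟩

theorem isSubterm {b : Bool} {s t : Term (SSym F V) V} (h : s.IsSubterm t)
    (ht : WellSorted ar m b t) : ∃ b', WellSorted ar m b' s := by
  induction h generalizing b with
  | refl => exact ⟨b, ht⟩
  | arg hmem _ ih =>
    obtain ⟨i, hi⟩ := List.mem_iff_getElem?.1 hmem
    exact ih ((app_iff.1 ht).2.2 i _ hi)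

theorem eq_true_of_properRoot {b : Bool} {t : Term (SSym F V) V} (h : WellSorted ar m b t)
    (ht : ProperRoot t) : b = true := by
  cases h with
  | var => rfl
  | app g ts =>
    cases g with
    | orig => rfl
    | guard => rfl
    | bot => exact absurd rfl (ht.1 ts)
    | tup ρ j => exact absurd rfl (ht.2 ρ j ts)

theorem of_ctxStep {root : Term (SSym F V) V → Term (SSym F V) V → Prop}
    (hroot : ∀ b s t, root s t → WellSorted ar m b s → WellSorted ar m b t)
    {b : Bool} {s t : Term (SSym F V) V} (h : CtxStep root s t) (hs : WellSorted ar m b s) :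
    WellSorted ar m b t := by
  induction h generalizing b with
  | root h => exact hroot _ _ _ h hs
  | @congr f pre post s t _ ih =>
    obtain ⟨hb, hl, h⟩ := app_iff.1 hs
    refine app_iff.2 ⟨hb, by simpa using hl, fun i u hi => ?_⟩
    rcases lt_trichotomy i pre.length with hlt | rfl | hgt
    · exact h i u (by rw [List.getElem?_append_left hlt] at hi ⊢; exact hi)
    · obtain rfl : t = u := by simpa using hi
      exact ih (h _ s (by simp))
    · obtain ⟨k, rfl⟩ : ∃ k, i = pre.length + (k + 1) := ⟨i - pre.length - 1, by omega⟩
      refine h _ u ?_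
      rw [List.getElem?_append_right (Nat.le_add_right _ _), Nat.add_sub_cancel_left,
        List.getElem?_cons_succ] at hi ⊢
      exact hi

/-! ### The mappings `t̄` and `ext` -/

theorem barT {t : Term F V} (h : t.WF ar) : WellSorted ar m true (barT m t) := by
  induction h with
  | var x =>
    rw [_root_.barT]
    exact .var x
  | app f ts hl _ ih =>
    rw [_root_.barT, orig_append_iff (by simpa using hl)]
    refine ⟨rfl, by simp, ?_, ?_⟩
    · simpa using ih
    · intro e he
      rw [List.eq_of_mem_replicate he]
      exact bot

theorem barR_subst {σ : RVar V → Term (SSym F V) V} {t : Term F V} (h : t.WF ar)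
    (hσ : ∀ x ∈ t.varList, WellSorted ar m true (σ (Sum.inl x))) :
    WellSorted ar m true ((barR m t).subst σ) := by
  induction h with
  | var x => simpa [barR, _root_.barT, Term.rename, Term.subst, Term.varList] using hσ
  | app f ts hl _ ih =>
    simp only [barR, _root_.barT, Term.rename, Term.subst, List.map_append, List.map_map,
      List.map_replicate]
    rw [orig_append_iff (by simpa using hl)]
    refine ⟨rfl, by simp, ?_, ?_⟩
    · intro u hu
      obtain ⟨t, ht, rfl⟩ := List.mem_map.1 hu
      refine ih t ht fun x hx => hσ x ?_
      simp only [Term.varList, List.mem_flatMap]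
      exact ⟨t, ht, hx⟩
    · intro e he
      rw [List.eq_of_mem_replicate he]
      simpa [botT, Term.subst] using bot (F := F) (V := V) (ar := ar) (m := m)

theorem of_extT_subst {σ : RVar V → Term (SSym F V) V} {t : Term F V} (h : t.WF ar) {c : ℕ}
    (hσ : WellSorted ar m true ((extT m t c).1.subst σ)) :
    ∀ x ∈ t.varList, WellSorted ar m true (σ (Sum.inl x)) := by
  induction h generalizing c with
  | var x => simpa [extT, Term.subst, Term.varList] using hσ
  | app f ts hl _ ih =>
    intro x hx
    simp only [Term.varList, List.mem_flatMap] at hx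
    obtain ⟨t, ht, hx⟩ := hx
    obtain ⟨c', hc'⟩ := exists_extT_mem_extTList m ht c
    simp only [extT, Term.subst, List.map_append] at hσ
    rw [orig_append_iff (by simpa [length_extTList] using hl)] at hσ
    exact ih t ht (hσ.2.2.1 _ (List.mem_map_of_mem hc')) x hx

/-- The instances of `slotT m idx ρ f ws a` are well-sorted iff those of its parts are. -/
theorem slotT_subst_iff {idx : CRule F V → ℕ} {σ : RVar V → Term (SSym F V) V} {b : Bool}
    {ρ : CRule F V} {f : F} {ws : List (Term F V)} {a : Term (SSym F V) (RVar V)}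
    (hws : ws.length = ar f) (hi : idx ρ < m f) :
    WellSorted ar m b ((slotT m idx ρ f ws a).subst σ) ↔
      b = true ∧
      (∀ w ∈ (extTList m ws 0).1, WellSorted ar m true (w.subst σ)) ∧
      (∀ q < m f, q ≠ idx ρ →
        WellSorted ar m false (σ (Sum.inr ((extTList m ws 0).2 + q)))) ∧
      WellSorted ar m false (a.subst σ) := by
  simp only [slotT, Term.subst, List.map_append, List.map_map]
  rw [orig_append_iff (by simpa [length_extTList] using hws)]
  simp only [List.length_map, List.length_range, true_and, List.mem_map, List.mem_range,
    Function.comp_apply, forall_exists_index, and_imp, forall_apply_eq_imp_iff₂]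
  refine and_congr Iff.rfl (and_congr Iff.rfl ⟨fun h => ⟨fun q hq hne => ?_, ?_⟩, ?_⟩)
  · simpa [hne, Term.subst] using h q hq
  · simpa using h _ hi
  · rintro ⟨h1, h2⟩ q hq
    by_cases hne : q = idx ρ
    · simpa [hne] using h2
    · simpa [hne, Term.subst] using h1 q hq hne

theorem tupT_subst_iff {σ : RVar V → Term (SSym F V) V} {b : Bool} {ρ : CRule F V} {j : ℕ}
    {a : Term (SSym F V) (RVar V)} :
    WellSorted ar m b ((tupT ρ j a).subst σ) ↔
      b = false ∧ WellSorted ar m true (a.subst σ) ∧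
      ∀ x ∈ Vlist ρ j, WellSorted ar m true (σ (Sum.inl x)) := by
  have hg : ((guardT a).subst σ : Term (SSym F V) V) = guardT (a.subst σ) := by
    simp [guardT, Term.subst]
  simp only [tupT, Term.subst, List.map_cons, List.map_map, tup_iff, List.mem_cons, List.mem_map,
    forall_eq_or_imp, hg, guard_iff, true_and, Function.comp_apply, forall_exists_index, and_imp,
    forall_apply_eq_imp_iff₂, List.length_cons, List.length_map]
  simp [add_comm]

/-! ### Rewriting with `SR(R)` preserves well-sortedness -/

theorem of_srSys {idx : CRule F V → ℕ} {R : CTRS F V} (hD : IsDCTRS ar R)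
    (hN : IsNumbering R m idx) {r : CRule (SSym F V) (RVar V)} (hr : SRSys ar m idx R r)
    {σ : RVar V → Term (SSym F V) V} {b : Bool} (h : WellSorted ar m b (r.lhs.subst σ)) :
    WellSorted ar m b (r.rhs.subst σ) := by
  have guard_subst : ∀ a : Term (SSym F V) (RVar V),
      ((guardT a).subst σ : Term (SSym F V) V) = guardT (a.subst σ) := by
    simp [guardT, Term.subst]
  have index_lt : ∀ {ρ : CRule F V} {f : F} {ws : List (Term F V)} {j : ℕ} {c}, ρ ∈ R → ρ.lhs = .app f ws →
      ρ.conds[j]? = some c → idx ρ < m f := by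
    intro ρ f ws j c hρ hl hc
    refine (hN f).mapsTo ⟨hρ, ?_, ws, hl⟩
    rintro h0
    simp [h0] at hc
  have args_length : ∀ {ρ : CRule F V} {f : F} {ws : List (Term F V)}, ρ ∈ R → ρ.lhs = .app f ws →
      ws.length = ar f ∧ ∀ w ∈ ws, w.WF ar := by
    intro ρ f ws hρ hl
    have := (hD ρ hρ).1.1
    rw [hl] at this
    cases this with
    | app _ _ h1 h2 => exact ⟨h1, h2⟩
  have lhs_vars : ∀ {ρ : CRule F V} {f : F} {ws : List (Term F V)}, ρ ∈ R → ρ.lhs = .app f ws →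
      (∀ w ∈ (extTList m ws 0).1, WellSorted ar m true (w.subst σ)) →
      ∀ x ∈ ρ.lhs.varList, WellSorted ar m true (σ (Sum.inl x)) := by
    intro ρ f ws hρ hl hw x hx
    simp only [hl, Term.varList, List.mem_flatMap] at hx
    obtain ⟨w, hmem, hx⟩ := hx
    obtain ⟨c', hc'⟩ := exists_extT_mem_extTList m hmem 0
    exact of_extT_subst ((args_length hρ hl).2 w hmem) (hw _ hc') x hx
  cases hr with
  | @uncond ρ hρ h0 =>
    obtain ⟨⟨hwl, hwr, -⟩, hvar, hdet, h3⟩ := hD ρ hρ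
    obtain rfl : b = true := by
      cases hl : ρ.lhs with
      | var x => exact absurd hl (hvar x)
      | app f ws =>
        simp only [hl, extT, Term.subst] at h
        exact (app_iff.1 h).1
    rw [guard_subst, guard_iff]
    refine ⟨rfl, barR_subst hwr fun x hx => of_extT_subst hwl h x ?_⟩
    rcases h3.mem_of_mem_varList hdet hx with hx | hx
    · exact hx
    · simp [Vlist, h0] at hx
  | @first ρ f ws s t hρ hl hc =>
    obtain ⟨⟨-, -, hwc⟩, -, hdet, -⟩ := hD ρ hρ
    have hlen := (args_length hρ hl).1
    have hi := index_lt hρ hl hc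
    rw [slotT_subst_iff hlen hi] at h ⊢
    obtain ⟨hb, hw, hz, -⟩ := h
    refine ⟨hb, hw, hz, tupT_subst_iff.2 ⟨rfl, ?_, by simp [Vlist]⟩⟩
    refine barR_subst (hwc _ (List.mem_of_getElem? hc)).1 fun x hx => ?_
    rcases hdet.mem_of_mem_varList hc hx with hx | hx
    · exact lhs_vars hρ hl hw x hx
    · simp [Vlist] at hx
  | @next ρ f ws j s t s' t' hρ hl hc hc' =>
    obtain ⟨⟨-, -, hwc⟩, -, hdet, -⟩ := hD ρ hρ
    have hlen := (args_length hρ hl).1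
    have hi := index_lt hρ hl hc
    rw [slotT_subst_iff hlen hi] at h ⊢
    obtain ⟨hb, hw, hz, ht⟩ := h
    obtain ⟨-, ht, hv⟩ := tupT_subst_iff.1 ht
    have hv' : ∀ x ∈ Vlist ρ (j + 1), WellSorted ar m true (σ (Sum.inl x)) := fun x hx =>
      (mem_Vlist_succ hc hx).elim (hv x)
        (of_extT_subst (hwc _ (List.mem_of_getElem? hc)).2 ht x)
    refine ⟨hb, hw, hz, tupT_subst_iff.2 ⟨rfl, ?_, hv'⟩⟩
    exact barR_subst (hwc _ (List.mem_of_getElem? hc')).1 fun x hx =>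
      (hdet.mem_of_mem_varList hc' hx).elim (lhs_vars hρ hl hw x) (hv' x)
  | @last ρ f ws j s t hρ hl hc hj =>
    obtain ⟨⟨-, hwr, hwc⟩, -, hdet, h3⟩ := hD ρ hρ
    have hlen := (args_length hρ hl).1
    have hi := index_lt hρ hl hc
    rw [slotT_subst_iff hlen hi] at h
    obtain ⟨hb, hw, hz, ht⟩ := h
    obtain ⟨-, ht, hv⟩ := tupT_subst_iff.1 ht
    rw [guard_subst, guard_iff]
    refine ⟨hb, barR_subst hwr fun x hx => ?_⟩
    rcases h3.mem_of_mem_varList hdet hx with hx | hx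
    · exact lhs_vars hρ hl hw x hx
    · rw [← hj] at hx
      exact (mem_Vlist_succ hc hx).elim (hv x)
        (of_extT_subst (hwc _ (List.mem_of_getElem? hc)).2 ht x)
  | unnest =>
    simp only [guard_subst, guard_iff] at h ⊢
    exact ⟨h.1, h.2.2⟩
  | @shift f i hi =>
    simp only [guard_subst, guard_iff]
    simp only [Term.subst, List.map_append, List.map_map, List.map_replicate] at h ⊢
    rw [orig_append_iff (by simp)] at h ⊢
    obtain ⟨hb, -, hx, -⟩ := h
    refine ⟨hb, rfl, by simp, ?_, ?_⟩
    · intro u hu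
      obtain ⟨q, hq, rfl⟩ := List.mem_map.1 hu
      have := hx _ (List.mem_map_of_mem hq)
      by_cases hqi : q = i
      · simpa [hqi, guard_subst, guard_iff] using this
      · simpa [hqi] using this
    · intro e he
      rw [List.eq_of_mem_replicate he]
      simpa [botT, Term.subst] using bot (F := F) (V := V) (ar := ar) (m := m)

theorem of_red {idx : CRule F V → ℕ} {R : CTRS F V} (hD : IsDCTRS ar R)
    (hN : IsNumbering R m idx) {b : Bool} {s t : Term (SSym F V) V}
    (h : Red {r | SRSys ar m idx R r} s t) (hs : WellSorted ar m b s) :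
    WellSorted ar m b t := by
  obtain ⟨n, hn⟩ := h
  cases n with
  | zero => exact hn.elim
  | succ n =>
    refine of_ctxStep ?_ hn hs
    rintro b s t ⟨r, hr, σ, rfl, rfl, -⟩ hs
    exact of_srSys hD hN hr hs

theorem of_reachable {idx : CRule F V → ℕ} {R : CTRS F V} (hD : IsDCTRS ar R)
    (hN : IsNumbering R m idx) {t : Term (SSym F V) V} (h : SRReachable ar m idx R t) :
    ∃ b, WellSorted ar m b t := by
  obtain ⟨s, t₀, hs, hred, hsub⟩ := h
  have ht₀ : WellSorted ar m true t₀ := by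
    clear hsub
    induction hred with
    | refl => exact guard_iff.2 ⟨rfl, barT hs⟩
    | tail _ hstep ih => exact of_red hD hN hstep ih
  exact isSubterm hsub ht₀

end WellSorted

/-! ### The term `t̂` and the set `Φ(t)` -/

theorem exists_mapM_hatT {ar m : F → ℕ} {idx : CRule F V → ℕ} {R : CTRS F V}
    (ts : List (Term (SSym F V) V))
    (h : ∀ t ∈ ts, ∃ s, hatT ar t = some s ∧ PhiMem ar m idx R t (liftU s)) :
    ∃ ss, ts.mapM (hatT ar) = some ss ∧ ss.length = ts.length ∧
      ∀ p ∈ ts.zip (ss.map liftU), PhiMem ar m idx R p.1 p.2 := by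
  induction ts with
  | nil => exact ⟨[], rfl, rfl, by simp⟩
  | cons t ts ih =>
    obtain ⟨s, hs, hs'⟩ := h t List.mem_cons_self
    obtain ⟨ss, hss, hl, hz⟩ := ih fun t ht => h t (List.mem_cons_of_mem _ ht)
    refine ⟨s :: ss, by simp [List.mapM_cons, hs, hss], by simp [hl], ?_⟩
    intro p hp
    rw [List.map_cons, List.zip_cons_cons] at hp
    rcases List.mem_cons.1 hp with rfl | hp
    · exact hs'
    · exact hz p hp

theorem WellSorted.exists_hatT {ar m : F → ℕ} {idx : CRule F V → ℕ} {R : CTRS F V}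
    (hN : IsNumbering R m idx) {b : Bool} {t : Term (SSym F V) V} (h : WellSorted ar m b t)
    (hb : b = true) : ∃ s, hatT ar t = some s ∧ PhiMem ar m idx R t (liftU s) := by
  induction h with
  | var x =>
    refine ⟨.var x, by simp [hatT], ?_⟩
    rw [liftU]
    exact .var x
  | app g as hl ha ih =>
    cases g with
    | bot => cases hb
    | tup => cases hb
    | guard =>
      obtain ⟨t, rfl⟩ := List.length_eq_one_iff.1 hl
      obtain ⟨s, hs, hs'⟩ := ih 0 t rfl rfl
      exact ⟨s, by simpa [hatT] using hs, .guard hs'⟩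
    | orig f =>
      obtain ⟨ts, es, rfl, hts⟩ := exists_append (.app _ as hl ha)
      obtain ⟨ss, hss, hsl, hz⟩ := exists_mapM_hatT (idx := idx) (R := R) (m := m) (ar := ar) ts
        (by
          intro t ht
          obtain ⟨i, hi⟩ := List.mem_iff_getElem?.1 ht
          have hil := (List.getElem?_eq_some_iff.1 hi).1
          exact ih i t (by rw [List.getElem?_append_left hil, hi])
            (by simp [SSym.argSort, ← hts, hil]))
      have hes : es.length = m f := by
        simp only [List.length_append, SSym.arity] at hl
        omega
      refine ⟨.app f ss, ?_, ?_⟩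
      · rw [hatT, ← hts, List.take_left]
        simp [hss]
      · simp only [liftU]
        by_cases hf : IsDefined R f
        · exact .reset hf hts hes (.plain hf hts (by simp [hsl, hts]) hz)
        · have hm := hN.eq_zero_of_not_isDefined hf
          obtain rfl : es = [] := List.length_eq_zero_iff.1 (hes.trans hm)
          rw [List.append_nil]
          exact .con hf hts (by simp [hsl, hts]) hz

end

theorem hat_mem_Phi {F : Type u} {V : Type v} [DecidableEq V]
    (ar m : F → ℕ) (idx : CRule F V → ℕ) (R : CTRS F V)
    (hD : IsDCTRS ar R) (hU : IsUWLL R) (hN : IsNumbering R m idx)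
    (t : Term (SSym F V) V) (ht : SRReachable ar m idx R t) (hroot : ProperRoot t) :
    (∃ s : Term F V, hatT ar t = some s ∧ liftU s ∈ Phi ar m idx R t) ∧
      1 ≤ (Phi ar m idx R t).encard := by
  obtain ⟨b, hb⟩ := WellSorted.of_reachable hD hN ht
  obtain ⟨s, hs, hmem⟩ := hb.exists_hatT hN (idx := idx) (R := R) (hb.eq_true_of_properRoot hroot)
  exact ⟨⟨s, hs, hmem⟩, Set.one_le_encard_iff_nonempty.2 ⟨_, hmem⟩⟩
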